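/- arXiv:1605.02571 — 2 statements merged into one kernel-verified Lean document; each statement's English description precedes it below -/
import Mathlib

section
/- Let X be a Tychonoff space and λ ∈ Ψ. The space C_λ(X) has countable tightness if and only if X is λ-Lindelöf. -/
open Set Filter Topology TopologicalSpace ContinuousMap

/-- A subset `A` of `X` is *C-compact* if `f '' A` is compact in `ℝ` for every
continuous real-valued function `f` on `X`. -/
def IsCCompact {X : Type*} [TopologicalSpace X] (A : Set X) : Prop :=
  ∀ f : C(X, ℝ), IsCompact (f '' A)

/-- The `λ`-open (set-open) topology on `C(X, ℝ)`, generated by the subbasic sets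
`[F, U] = {f : f '' F ⊆ U}` for `F ∈ lam` and `U ⊆ ℝ` open. -/
def setOpenTopology {X : Type*} [TopologicalSpace X] (lam : Set (Set X)) :
    TopologicalSpace C(X, ℝ) :=
  TopologicalSpace.generateFrom
    {S | ∃ F ∈ lam, ∃ U : Set ℝ, IsOpen U ∧ S = {f : C(X, ℝ) | f '' F ⊆ U}}

/-- Membership in the collection `Ψ`: a family of nonempty closed C-compact subsets of `X`
forming a π-network, hereditary with respect to (closed) C-compact subsets of its elements,
and maximal among families of nonempty sets inducing the same set-open topology. -/
structure MemPsi {X : Type*} [TopologicalSpace X] (lam : Set (Set X)) : Prop where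
  nonempty : ∀ A ∈ lam, A.Nonempty
  closed : ∀ A ∈ lam, IsClosed A
  ccompact : ∀ A ∈ lam, IsCCompact A
  piNetwork : ∀ U : Set X, IsOpen U → U.Nonempty → ∃ A ∈ lam, A ⊆ U
  hereditary : ∀ A ∈ lam, ∀ B : Set X, B ⊆ A → B.Nonempty → IsClosed B → IsCCompact B →
    B ∈ lam
  maximal : ∀ lam' : Set (Set X), (∀ A ∈ lam', A.Nonempty) →
    setOpenTopology lam' = setOpenTopology lam → lam' ⊆ lam

/-- A cozero (functional open) subset of `X`: the complement of a zero-set. -/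
def IsCozero {X : Type*} [TopologicalSpace X] (U : Set X) : Prop :=
  ∃ f : C(X, ℝ), U = {x | f x ≠ 0}

/-- `𝒰` is a `λ`-f-cover: a family of cozero sets, not containing `X`, such that every
member of `lam` is contained in some member of `𝒰`. -/
def IsFCover {X : Type*} [TopologicalSpace X] (lam : Set (Set X)) (𝒰 : Set (Set X)) : Prop :=
  (Set.univ : Set X) ∉ 𝒰 ∧ (∀ U ∈ 𝒰, IsCozero U) ∧ ∀ A ∈ lam, ∃ U ∈ 𝒰, A ⊆ U

/-- `Λ(λ)`: the collection of all `λ`-f-covers of `X`. -/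
def fCovers {X : Type*} [TopologicalSpace X] (lam : Set (Set X)) : Set (Set (Set X)) :=
  {𝒰 | IsFCover lam 𝒰}

/-- The selection principle `S₁(𝒜, ℬ)`. -/
def S1 {α : Type*} (𝒜 ℬ : Set (Set α)) : Prop :=
  ∀ A : ℕ → Set α, (∀ n, A n ∈ 𝒜) →
    ∃ b : ℕ → α, (∀ n, b n ∈ A n) ∧ Set.range b ∈ ℬ

/-- The selection principle `S_fin(𝒜, ℬ)`. -/
def Sfin {α : Type*} (𝒜 ℬ : Set (Set α)) : Prop :=
  ∀ A : ℕ → Set α, (∀ n, A n ∈ 𝒜) →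
    ∃ B : ℕ → Set α, (∀ n, (B n).Finite ∧ B n ⊆ A n) ∧ (⋃ n, B n) ∈ ℬ

/-- `Ω_y` with respect to the topology `t`: sets having `y` in their closure but not
containing `y`. -/
def OmegaPt {Y : Type*} (t : TopologicalSpace Y) (y : Y) : Set (Set Y) :=
  {A | y ∈ @closure Y t A ∧ y ∉ A}

/-- Countable `(t₁, t₂)`-tightness of a bitopological space. -/
def CountableBiTightness {Y : Type*} (t1 t2 : TopologicalSpace Y) : Prop :=
  ∀ A : Set Y, ∀ f ∈ @closure Y t1 A, ∃ B ⊆ A, B.Countable ∧ f ∈ @closure Y t2 B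

/-- `X` is `λ`-`μ`-Lindelöf: every `λ`-f-cover has a countable subfamily which is a
`μ`-f-cover. -/
def LamMuLindelof {X : Type*} [TopologicalSpace X] (lam mu : Set (Set X)) : Prop :=
  ∀ 𝒰 : Set (Set X), IsFCover lam 𝒰 → ∃ 𝒱 ⊆ 𝒰, 𝒱.Countable ∧ IsFCover mu 𝒱

/-- Countable `(t₁, t₂)`-T-tightness: for every uncountable regular cardinal `κ` and every
increasing `κ`-indexed sequence of `t₁`-closed sets, the union is `t₂`-closed. -/
def CountableBiTTightness {Y : Type*} (t1 t2 : TopologicalSpace Y) : Prop :=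
  ∀ κ : Cardinal.{0}, Cardinal.aleph0 < κ → κ.IsRegular →
    ∀ A : κ.ord.ToType → Set Y, Monotone A → (∀ α, @IsClosed Y t1 (A α)) →
      @IsClosed Y t2 (⋃ α, A α)

/-- `X` is separably `λ`-submetrizable: there is a continuous map of `X` onto a separable
metric space which is one-to-one on `⋃ lam`. -/
def SeparablyLamSubmetrizable (X : Type*) [TopologicalSpace X] (lam : Set (Set X)) : Prop :=
  ∃ (Y : Type) (m : MetricSpace Y),
    @SeparableSpace Y m.toPseudoMetricSpace.toUniformSpace.toTopologicalSpace ∧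
    ∃ f : X → Y,
      @Continuous X Y _ m.toPseudoMetricSpace.toUniformSpace.toTopologicalSpace f ∧
      Function.Surjective f ∧ Set.InjOn f (⋃₀ lam)

/-- `R`-separability for a pair of topologies: from every sequence of `t₁`-dense sets one
can pick single points forming a `t₂`-dense set. -/
def RSepBi {Y : Type*} (t1 t2 : TopologicalSpace Y) : Prop :=
  ∀ D : ℕ → Set Y, (∀ n, @Dense Y t1 (D n)) →
    ∃ d : ℕ → Y, (∀ n, d n ∈ D n) ∧ @Dense Y t2 (Set.range d)

/-- `M`-separability for a pair of topologies. -/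
def MSepBi {Y : Type*} (t1 t2 : TopologicalSpace Y) : Prop :=
  ∀ D : ℕ → Set Y, (∀ n, @Dense Y t1 (D n)) →
    ∃ F : ℕ → Set Y, (∀ n, (F n).Finite ∧ F n ⊆ D n) ∧ @Dense Y t2 (⋃ n, F n)

/-- `H`-separability for a pair of topologies. -/
def HSepBi {Y : Type*} (t1 t2 : TopologicalSpace Y) : Prop :=
  ∀ D : ℕ → Set Y, (∀ n, @Dense Y t1 (D n)) →
    ∃ F : ℕ → Set Y, (∀ n, (F n).Finite ∧ F n ⊆ D n) ∧
      ∀ G : Set Y, @IsOpen Y t2 G → G.Nonempty →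
        ∀ᶠ n in Filter.atTop, (G ∩ F n).Nonempty

/-- A countable set `D` is groupable with respect to the topology `t`. -/
def GroupableIn {Y : Type*} (t : TopologicalSpace Y) (D : Set Y) : Prop :=
  ∃ A : ℕ → Set Y, (∀ n, (A n).Finite) ∧ D = ⋃ n, A n ∧
    ∀ G : Set Y, @IsOpen Y t G → G.Nonempty →
      ∀ᶠ n in Filter.atTop, (G ∩ A n).Nonempty

/-- `GN`-separability for a pair of topologies. -/
def GNSepBi {Y : Type*} (t1 t2 : TopologicalSpace Y) : Prop :=
  ∀ D : ℕ → Set Y, (∀ n, @Dense Y t1 (D n)) →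
    ∃ d : ℕ → Y, (∀ n, d n ∈ D n) ∧ @Dense Y t2 (Set.range d) ∧
      GroupableIn t2 (Set.range d)

/-- The `(t₁, t₂)`-Pytkeev property for a bitopological space. -/
def PytkeevBi {Y : Type*} (t1 t2 : TopologicalSpace Y) : Prop :=
  ∀ A : Set Y, ∀ g ∈ @closure Y t1 A, g ∉ A →
    ∃ B : ℕ → Set Y, (∀ n, (B n).Infinite ∧ B n ⊆ A) ∧
      ∀ G ∈ @nhds Y t2 g, ∃ n, B n ⊆ G

/-- A groupable `μ`-f-cover. -/
def GroupableFCover {X : Type*} [TopologicalSpace X] (mu 𝒱 : Set (Set X)) : Prop :=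
  𝒱.Countable ∧ IsFCover mu 𝒱 ∧
    ∃ G : ℕ → Set (Set X), (∀ m, (G m).Finite) ∧
      (Pairwise fun m k => Disjoint (G m) (G k)) ∧ 𝒱 = ⋃ m, G m ∧
      ∀ F ∈ mu, ∀ᶠ m in Filter.atTop, ∃ U ∈ G m, F ⊆ U

theorem IsCCompact.inter_closedBall {X : Type*} [TopologicalSpace X] {F : Set X}
    (hF : IsCCompact F) (f : C(X, ℝ)) (y r : ℝ) :
    IsCCompact (F ∩ f ⁻¹' Metric.closedBall y r) := by
  intro g
  have hpair : IsCompact ((fun x => (g x, f x)) '' F) := by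
    have hb : (fun x => (g x, f x)) '' F ⊆ (g '' F) ×ˢ (f '' F) := by
      rintro _ ⟨x, hx, rfl⟩
      exact ⟨⟨x, hx, rfl⟩, ⟨x, hx, rfl⟩⟩
    refine ((hF g).prod (hF f)).of_isClosed_subset ?_ hb
    refine isClosed_of_closure_subset ?_
    intro p hp
    let d : C(X, ℝ) := ⟨fun x => dist (g x, f x) p, by fun_prop⟩
    have h0 : (0 : ℝ) ∈ closure (d '' F) := by
      rw [Metric.mem_closure_iff] at hp ⊢
      intro ε hε
      obtain ⟨_, ⟨x, hx, rfl⟩, hd⟩ := hp ε hε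
      refine ⟨d x, ⟨x, hx, rfl⟩, ?_⟩
      rw [dist_comm] at hd
      simpa [d, Real.dist_eq, abs_of_nonneg dist_nonneg] using hd
    rw [(hF d).isClosed.closure_eq] at h0
    obtain ⟨x, hx, hd⟩ := h0
    exact ⟨x, hx, dist_eq_zero.1 hd⟩
  have h2 : IsCompact (((fun x => (g x, f x)) '' F) ∩ Prod.snd ⁻¹' Metric.closedBall y r) :=
    hpair.inter_right (Metric.isClosed_closedBall.preimage continuous_snd)
  have h3 := h2.image continuous_fst
  convert h3 using 1
  ext z
  constructor
  · rintro ⟨x, ⟨hx, hxy⟩, rfl⟩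
    exact ⟨(g x, f x), ⟨⟨x, hx, rfl⟩, hxy⟩, rfl⟩
  · rintro ⟨_, ⟨⟨x, hx, rfl⟩, hxy⟩, rfl⟩
    exact ⟨x, ⟨hx, hxy⟩, rfl⟩

theorem MemPsi.union_mem {X : Type*} [TopologicalSpace X] {lam : Set (Set X)}
    (hlam : MemPsi lam) {A B : Set X} (hA : A ∈ lam) (hB : B ∈ lam) : A ∪ B ∈ lam := by
  refine hlam.maximal (insert (A ∪ B) lam) ?_ ?_ (mem_insert _ _)
  · rintro C (rfl | hC)
    · exact (hlam.nonempty A hA).mono subset_union_left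
    · exact hlam.nonempty C hC
  · apply le_antisymm
    · apply le_generateFrom
      rintro S ⟨F, hF, U, hU, rfl⟩
      exact GenerateOpen.basic _ ⟨F, mem_insert_of_mem _ hF, U, hU, rfl⟩
    · apply le_generateFrom
      rintro S ⟨F, rfl | hF, U, hU, rfl⟩
      · have : {f : C(X, ℝ) | f '' (A ∪ B) ⊆ U} =
            {f : C(X, ℝ) | f '' A ⊆ U} ∩ {f : C(X, ℝ) | f '' B ⊆ U} := by
          ext f
          simp [image_union]
        rw [this]
        exact GenerateOpen.inter _ _ (GenerateOpen.basic _ ⟨A, hA, U, hU, rfl⟩)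
          (GenerateOpen.basic _ ⟨B, hB, U, hU, rfl⟩)
      · exact GenerateOpen.basic _ ⟨F, hF, U, hU, rfl⟩

theorem MemPsi.approx_of_mem_closure {X : Type*} [TopologicalSpace X] {lam : Set (Set X)}
    (hlam : MemPsi lam) {A : Set C(X, ℝ)} {f : C(X, ℝ)}
    (hf : f ∈ @closure _ (setOpenTopology lam) A) {F : Set X} (hF : F ∈ lam) {ε : ℝ}
    (hε : 0 < ε) : ∃ g ∈ A, ∀ x ∈ F, |g x - f x| < ε := by
  letI := setOpenTopology lam
  obtain ⟨t, htF, htfin, hcov⟩ :=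
    (hlam.ccompact F hF f).finite_cover_balls (show 0 < ε / 4 by linarith)
  have hopen : IsOpen (⋂ y ∈ t, {g : C(X, ℝ) |
      g '' (F ∩ f ⁻¹' Metric.closedBall y (ε / 4)) ⊆ Metric.ball y (ε / 2)}) := by
    refine htfin.isOpen_biInter ?_
    intro y hy
    refine GenerateOpen.basic _ ⟨_, ?_, Metric.ball y (ε / 2), Metric.isOpen_ball, rfl⟩
    refine hlam.hereditary F hF _ inter_subset_left ?_ ?_
      ((hlam.ccompact F hF).inter_closedBall f y _)
    · obtain ⟨x, hx, hxy⟩ := htF hy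
      refine ⟨x, hx, ?_⟩
      simp only [mem_preimage, hxy]
      exact Metric.mem_closedBall_self (by linarith)
    · exact (hlam.closed F hF).inter (Metric.isClosed_closedBall.preimage f.continuous)
  rw [mem_closure_iff] at hf
  obtain ⟨g, hg, hgA⟩ := hf _ hopen (by
    simp only [mem_iInter, mem_setOf_eq]
    rintro y hy _ ⟨x, ⟨hx, hxy⟩, rfl⟩
    exact Metric.closedBall_subset_ball (by linarith) hxy)
  refine ⟨g, hgA, fun x hx => ?_⟩
  have h1 := hcov ⟨x, hx, rfl⟩
  simp only [mem_iUnion] at h1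
  obtain ⟨y, hy, hxy⟩ := h1
  simp only [mem_iInter, mem_setOf_eq] at hg
  have h2 := hg y hy ⟨x, ⟨hx, Metric.ball_subset_closedBall hxy⟩, rfl⟩
  rw [Metric.mem_ball] at h2 hxy
  rw [← Real.dist_eq]
  have := dist_triangle_right (g x) (f x) y
  linarith

theorem MemPsi.open_contains {X : Type*} [TopologicalSpace X] [Nonempty X] {lam : Set (Set X)}
    (hlam : MemPsi lam) {f : C(X, ℝ)} {O : Set C(X, ℝ)}
    (hO : IsOpen[setOpenTopology lam] O) (hf : f ∈ O) :
    ∃ F ∈ lam, ∃ ε > 0, ∀ g : C(X, ℝ), (∀ x ∈ F, |g x - f x| < ε) → g ∈ O := by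
  change GenerateOpen _ O at hO
  induction hO with
  | basic S hS =>
    obtain ⟨F, hF, U, hU, rfl⟩ := hS
    obtain ⟨ε, hε, h⟩ := (hlam.ccompact F hF f).exists_thickening_subset_open hU hf
    refine ⟨F, hF, ε, hε, fun g hg => ?_⟩
    rintro _ ⟨x, hx, rfl⟩
    apply h
    rw [Metric.mem_thickening_iff]
    exact ⟨f x, ⟨x, hx, rfl⟩, by rw [Real.dist_eq]; exact hg x hx⟩
  | univ =>
    obtain ⟨F, hF, -⟩ := hlam.piNetwork univ isOpen_univ univ_nonempty
    exact ⟨F, hF, 1, one_pos, fun _ _ => trivial⟩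
  | inter S T _ _ ihS ihT =>
    obtain ⟨F, hF, ε, hε, h⟩ := ihS hf.1
    obtain ⟨G, hG, δ, hδ, h'⟩ := ihT hf.2
    refine ⟨F ∪ G, hlam.union_mem hF hG, min ε δ, lt_min hε hδ, fun g hg => ⟨h g ?_, h' g ?_⟩⟩
    · exact fun x hx => (hg x (Or.inl hx)).trans_le (min_le_left _ _)
    · exact fun x hx => (hg x (Or.inr hx)).trans_le (min_le_right _ _)
  | sUnion S _ ih =>
    obtain ⟨T, hT, hfT⟩ := hf
    obtain ⟨F, hF, ε, hε, h⟩ := ih T hT hfT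
    exact ⟨F, hF, ε, hε, fun g hg => ⟨T, hT, h g hg⟩⟩

theorem MemPsi.mem_closure_of_approx {X : Type*} [TopologicalSpace X] [Nonempty X]
    {lam : Set (Set X)} (hlam : MemPsi lam) {A : Set C(X, ℝ)} {f : C(X, ℝ)}
    (h : ∀ F ∈ lam, ∀ ε > 0, ∃ g ∈ A, ∀ x ∈ F, |g x - f x| < ε) :
    f ∈ @closure _ (setOpenTopology lam) A := by
  letI := setOpenTopology lam
  rw [mem_closure_iff]
  intro O hO hf
  obtain ⟨F, hF, ε, hε, hO⟩ := hlam.open_contains hO hf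
  obtain ⟨g, hg, hgF⟩ := h F hF ε hε
  exact ⟨g, hO g hgF, hg⟩

theorem lindelof_of_tight {X : Type*} [TopologicalSpace X] [Nonempty X]
    {lam : Set (Set X)} (hlam : MemPsi lam)
    (ht : CountableBiTightness (setOpenTopology lam) (setOpenTopology lam)) :
    LamMuLindelof lam lam := by
  rintro 𝒰 ⟨hX, hcoz, hcov⟩
  have h0 : (0 : C(X, ℝ)) ∈ @closure _ (setOpenTopology lam)
      {f : C(X, ℝ) | ∃ U ∈ 𝒰, ∀ x ∉ U, f x = 1} := by
    apply hlam.mem_closure_of_approx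
    intro F hF ε hε
    obtain ⟨U, hU, hFU⟩ := hcov F hF
    obtain ⟨h, rfl⟩ := hcoz U hU
    have hc := hlam.ccompact F hF h
    obtain ⟨δ, hδ, hb⟩ := hc.exists_thickening_subset_open
      (isOpen_compl_singleton (x := (0 : ℝ))) (by
        rintro _ ⟨x, hx, rfl⟩
        exact hFU hx)
    refine ⟨⟨fun x => max 0 (1 - |h x| / δ), by fun_prop⟩, ⟨_, hU, ?_⟩, ?_⟩
    · intro x hx
      have : h x = 0 := by simpa using hx
      simp [this]
    · intro x hx
      have h1 : δ ≤ |h x| := by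
        by_contra hlt
        push Not at hlt
        have : (0 : ℝ) ∈ Metric.thickening δ (h '' F) := by
          rw [Metric.mem_thickening_iff]
          exact ⟨h x, ⟨x, hx, rfl⟩, by rw [dist_comm, Real.dist_eq, sub_zero]; exact hlt⟩
        exact hb this rfl
      have h2 : 1 ≤ |h x| / δ := by rwa [le_div_iff₀ hδ, one_mul]
      have h3 : max 0 (1 - |h x| / δ) = 0 := max_eq_left (by linarith)
      simpa [h3] using hε
  obtain ⟨B, hBA, hBc, hB⟩ := ht _ _ h0
  have hBA' : ∀ f : C(X, ℝ), f ∈ B → ∃ U, U ∈ 𝒰 ∧ ∀ x ∉ U, f x = 1 := fun f hf => hBA hf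
  choose! V hV hV1 using hBA'
  refine ⟨V '' B, ?_, hBc.image V, ?_, ?_, ?_⟩
  · rintro _ ⟨f, hf, rfl⟩
    exact hV _ hf
  · rintro ⟨f, hf, h⟩
    exact hX (h ▸ hV _ hf)
  · rintro _ ⟨f, hf, rfl⟩
    exact hcoz _ (hV _ hf)
  · intro F hF
    obtain ⟨g, hg, hgF⟩ := hlam.approx_of_mem_closure hB hF one_pos
    refine ⟨V g, ⟨g, hg, rfl⟩, fun x hx => ?_⟩
    by_contra hxV
    have := hgF x hx
    rw [hV1 _ hg x hxV] at this
    simp at this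

theorem tight_of_lindelof {X : Type*} [TopologicalSpace X] [Nonempty X]
    {lam : Set (Set X)} (hlam : MemPsi lam) (hL : LamMuLindelof lam lam) :
    CountableBiTightness (setOpenTopology lam) (setOpenTopology lam) := by
  intro A f hf
  have key : ∀ n : ℕ, ∃ B ⊆ A, B.Countable ∧
      ∀ F ∈ lam, ∃ g ∈ B, ∀ x ∈ F, |g x - f x| < 1 / ((n : ℝ) + 1) := by
    intro n
    have hn : 0 < 1 / ((n : ℝ) + 1) := Nat.one_div_pos_of_nat
    generalize 1 / ((n : ℝ) + 1) = ε at hn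
    let W : C(X, ℝ) → Set X := fun g => {x | |g x - f x| < ε}
    by_cases hX : univ ∈ W '' A
    · obtain ⟨g, hg, hgW⟩ := hX
      refine ⟨{g}, by simpa using hg, countable_singleton g, fun F _ => ⟨g, rfl, fun x _ => ?_⟩⟩
      have : x ∈ W g := hgW ▸ mem_univ x
      exact this
    · obtain ⟨𝒱, h𝒱, hc, -, -, hcov⟩ := hL (W '' A) ⟨hX, by
        rintro _ ⟨g, hg, rfl⟩
        refine ⟨⟨fun x => max 0 (ε - |g x - f x|), by fun_prop⟩, ?_⟩
        ext x
        simp [W], by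
        intro F hF
        obtain ⟨g, hg, hgF⟩ := hlam.approx_of_mem_closure hf hF hn
        exact ⟨W g, ⟨g, hg, rfl⟩, hgF⟩⟩
      have h𝒱' : ∀ V : Set X, V ∈ 𝒱 → ∃ g, g ∈ A ∧ W g = V := fun V hV => h𝒱 hV
      choose! k hkA hk using h𝒱'
      refine ⟨k '' 𝒱, ?_, hc.image k, ?_⟩
      · rintro _ ⟨V, hV, rfl⟩
        exact hkA _ hV
      · intro F hF
        obtain ⟨V, hV, hFV⟩ := hcov F hF
        refine ⟨k V, ⟨V, hV, rfl⟩, fun x hx => ?_⟩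
        have : x ∈ W (k V) := (hk _ hV).symm ▸ hFV hx
        exact this
  choose B hBA hBc hB using key
  refine ⟨⋃ n, B n, iUnion_subset hBA, countable_iUnion hBc, ?_⟩
  apply hlam.mem_closure_of_approx
  intro F hF ε hε
  obtain ⟨n, hn⟩ := exists_nat_one_div_lt hε
  obtain ⟨g, hg, hgF⟩ := hB n F hF
  exact ⟨g, mem_iUnion.2 ⟨n, hg⟩, fun x hx => (hgF x hx).trans hn⟩

/-- For a Tychonoff space `X` and `λ ∈ Ψ`, the space `C_λ(X)` has countable
tightness iff `X` is `λ`-Lindelöf. -/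
theorem countableTightness_iff_lamLindelof
    {X : Type*} [TopologicalSpace X] [T35Space X]
    (lam : Set (Set X)) (hlam : MemPsi lam) :
    CountableBiTightness (setOpenTopology lam) (setOpenTopology lam) ↔
      LamMuLindelof lam lam := by
  rcases isEmpty_or_nonempty X with hX | hX
  · constructor
    · rintro - 𝒰 ⟨h1, h2, -⟩
      refine ⟨∅, empty_subset _, countable_empty, by simp, by simp, fun A hA => ?_⟩
      obtain ⟨x, -⟩ := hlam.nonempty A hA
      exact hX.elim x
    · intro _ A f hf
      have : Subsingleton C(X, ℝ) := ⟨fun f g => ContinuousMap.ext fun x => hX.elim x⟩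
      exact ⟨A, Subset.rfl, (subsingleton_of_subsingleton).countable, hf⟩
  · exact ⟨lindelof_of_tight hlam, tight_of_lindelof hlam⟩
end

section
/- Let X be a Tychonoff space and let λ, μ ∈ Ψ with μ ⊆ λ. Then C(X) satisfies S_fin((Ω_0)^λ, (Ω_0)^μ) if and only if X has property S_fin(Λ(λ), Λ(μ)). -/
open Set Filter Topology TopologicalSpace ContinuousMap

theorem memPsi_union {X : Type*} [TopologicalSpace X] {lam : Set (Set X)} (h : MemPsi lam)
    {A B : Set X} (hA : A ∈ lam) (hB : B ∈ lam) : A ∪ B ∈ lam := by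
  refine h.maximal (insert (A ∪ B) lam) ?_ ?_ (mem_insert _ _)
  · rintro C (rfl | hC)
    · exact (h.nonempty A hA).mono subset_union_left
    · exact h.nonempty C hC
  · apply le_antisymm
    · apply generateFrom_anti
      rintro S ⟨F, hF, U, hU, rfl⟩
      exact ⟨F, Or.inr hF, U, hU, rfl⟩
    · apply le_generateFrom
      rintro S ⟨F, hF, U, hU, rfl⟩
      rcases hF with rfl | hF
      · have : {f : C(X, ℝ) | f '' (A ∪ B) ⊆ U} =
            {f : C(X, ℝ) | f '' A ⊆ U} ∩ {f : C(X, ℝ) | f '' B ⊆ U} := by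
          ext f
          simp only [mem_setOf_eq, image_union, union_subset_iff, mem_inter_iff]
        rw [this]
        exact GenerateOpen.inter _ _
          (GenerateOpen.basic _ ⟨A, hA, U, hU, rfl⟩) (GenerateOpen.basic _ ⟨B, hB, U, hU, rfl⟩)
      · exact GenerateOpen.basic _ ⟨F, hF, U, hU, rfl⟩

theorem mem_closure_setOpen {X : Type*} [TopologicalSpace X] [Nonempty X]
    {lam : Set (Set X)} (h : MemPsi lam) (S : Set C(X, ℝ)) :
    (0 : C(X, ℝ)) ∈ @closure _ (setOpenTopology lam) S ↔
      ∀ A ∈ lam, ∀ ε : ℝ, 0 < ε → ∃ f ∈ S, ∀ x ∈ A, |f x| < ε := by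
  rw [@mem_closure_iff _ (setOpenTopology lam)]
  constructor
  · intro H A hA ε hε
    obtain ⟨f, hf, hfS⟩ := H {f : C(X, ℝ) | f '' A ⊆ Metric.ball 0 ε}
      (GenerateOpen.basic _ ⟨A, hA, _, Metric.isOpen_ball, rfl⟩) (by
        rintro _ ⟨x, _, rfl⟩
        simpa using hε)
    refine ⟨f, hfS, fun x hx => ?_⟩
    simpa using hf ⟨x, hx, rfl⟩
  · intro H O hO h0
    have key : ∃ A ∈ lam, ∃ ε : ℝ, 0 < ε ∧ ∀ f : C(X, ℝ), (∀ x ∈ A, |f x| < ε) → f ∈ O := by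
      clear H
      induction hO with
      | basic s hs =>
        obtain ⟨F, hF, U, hU, rfl⟩ := hs
        obtain ⟨x, hx⟩ := h.nonempty F hF
        have h0U : (0 : ℝ) ∈ U := h0 ⟨x, hx, rfl⟩
        obtain ⟨ε, hε, hb⟩ := Metric.isOpen_iff.1 hU 0 h0U
        refine ⟨F, hF, ε, hε, ?_⟩
        rintro f hf _ ⟨y, hy, rfl⟩
        exact hb (by simpa using hf y hy)
      | univ =>
        obtain ⟨A, hA, -⟩ := h.piNetwork univ isOpen_univ univ_nonempty
        exact ⟨A, hA, 1, one_pos, fun _ _ => mem_univ _⟩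
      | inter s t _ _ hs ht =>
        obtain ⟨A, hA, ε, hε, h1⟩ := hs h0.1
        obtain ⟨B, hB, δ, hδ, h2⟩ := ht h0.2
        refine ⟨A ∪ B, memPsi_union h hA hB, min ε δ, lt_min hε hδ, fun f hf => ⟨?_, ?_⟩⟩
        · exact h1 f fun x hx => (hf x (Or.inl hx)).trans_le (min_le_left _ _)
        · exact h2 f fun x hx => (hf x (Or.inr hx)).trans_le (min_le_right _ _)
      | sUnion K _ ih =>
        obtain ⟨s, hs, h0s⟩ := h0
        obtain ⟨A, hA, ε, hε, h1⟩ := ih s hs h0s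
        exact ⟨A, hA, ε, hε, fun f hf => ⟨s, hs, h1 f hf⟩⟩
    obtain ⟨A, hA, ε, hε, h1⟩ := key
    obtain ⟨f, hfS, hf⟩ := H A hA ε hε
    exact ⟨f, h1 f hf, hfS⟩

theorem isCozero_lt {X : Type*} [TopologicalSpace X] (f : C(X, ℝ)) (ε : ℝ) :
    IsCozero {x | |f x| < ε} := by
  refine ⟨⟨fun x => max 0 (ε - |f x|), by fun_prop⟩, ?_⟩
  ext x
  simp

theorem exists_sep {X : Type*} [TopologicalSpace X] {A U : Set X} (hA : IsCCompact A)
    (hU : IsCozero U) (hAU : A ⊆ U) :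
    ∃ f : C(X, ℝ), (∀ x ∈ A, f x = 0) ∧ ∀ x ∉ U, f x = 1 := by
  obtain ⟨g, rfl⟩ := hU
  have hc : IsClosed (g '' A) := (hA g).isClosed
  have h0 : (0 : ℝ) ∈ (g '' A)ᶜ := by
    rintro ⟨x, hx, h⟩
    exact hAU hx h
  obtain ⟨ε, hε, hb⟩ := Metric.isOpen_iff.1 hc.isOpen_compl 0 h0
  refine ⟨⟨fun x => max 0 (1 - |g x| / ε), by fun_prop⟩, ?_, ?_⟩
  · intro x hx
    have : ε ≤ |g x| := by
      by_contra hlt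
      exact hb (show g x ∈ Metric.ball 0 ε by simpa using hlt) ⟨x, hx, rfl⟩
    have : 1 ≤ |g x| / ε := (one_le_div hε).2 this
    simpa using this
  · intro x hx
    have : g x = 0 := by simpa using hx
    simp [this]

/-- For a Tychonoff space `X` and `λ, μ ∈ Ψ` with `μ ⊆ λ`, `C(X)` satisfies
`S_fin((Ω_0)^λ, (Ω_0)^μ)` iff `X` has property `S_fin(Λ(λ), Λ(μ))`. -/
theorem sfin_omega_iff_sfin_fCovers
    {X : Type*} [TopologicalSpace X] [T35Space X]
    (lam mu : Set (Set X)) (hlam : MemPsi lam) (hmu : MemPsi mu) (hsub : mu ⊆ lam) :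
    Sfin (OmegaPt (setOpenTopology lam) (0 : C(X, ℝ)))
        (OmegaPt (setOpenTopology mu) (0 : C(X, ℝ))) ↔
      Sfin (fCovers lam) (fCovers mu) := by
  rcases isEmpty_or_nonempty X with hX | hX
  · constructor
    · intro _ A _
      refine ⟨fun _ => ∅, fun _ => ⟨finite_empty, empty_subset _⟩, ?_, ?_, ?_⟩
      · simp
      · simp
      · intro B hB
        exact isEmptyElim (hmu.nonempty B hB).some
    · intro _ A hA
      exfalso
      obtain ⟨h1, h2⟩ := hA 0
      have hne : (A 0).Nonempty :=
        (@closure_nonempty_iff _ (setOpenTopology lam) (A 0)).1 ⟨_, h1⟩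
      obtain ⟨f, hf⟩ := hne
      have : f = 0 := by
        ext x
        exact isEmptyElim x
      exact h2 (this ▸ hf)
  constructor
  · intro H 𝒰 h𝒰
    let A : ℕ → Set C(X, ℝ) := fun n => {f | ∃ U ∈ 𝒰 n, ∀ x ∉ U, f x = 1}
    have hA : ∀ n, A n ∈ OmegaPt (setOpenTopology lam) (0 : C(X, ℝ)) := by
      intro n
      obtain ⟨hX, hcoz, hcov⟩ := h𝒰 n
      constructor
      · rw [mem_closure_setOpen hlam]
        intro K hK ε hε
        obtain ⟨U, hU, hKU⟩ := hcov K hK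
        obtain ⟨f, hf0, hf1⟩ := exists_sep (hlam.ccompact K hK) (hcoz U hU) hKU
        refine ⟨f, ⟨U, hU, hf1⟩, fun x hx => ?_⟩
        rw [hf0 x hx]
        simpa using hε
      · rintro ⟨U, hU, h1⟩
        apply hX
        have : U = univ := by
          ext x
          by_contra hx
          have hx' : x ∉ U := by simpa using hx
          simpa using h1 x hx'
        exact this ▸ hU
    obtain ⟨B, hB, hcl, -⟩ := H A hA
    rw [mem_closure_setOpen hmu] at hcl
    have hch : ∀ n, ∀ f : C(X, ℝ), ∃ U : Set X, f ∈ A n → U ∈ 𝒰 n ∧ ∀ x ∉ U, f x = 1 := by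
      intro n f
      by_cases hf : f ∈ A n
      · obtain ⟨U, h1, h2⟩ := hf
        exact ⟨U, fun _ => ⟨h1, h2⟩⟩
      · exact ⟨∅, fun h => absurd h hf⟩
    choose W hW using hch
    have hsubW : ∀ n, W n '' B n ⊆ 𝒰 n := by
      rintro n _ ⟨f, hf, rfl⟩
      exact (hW n f ((hB n).2 hf)).1
    refine ⟨fun n => W n '' B n, fun n => ⟨(hB n).1.image _, hsubW n⟩, ?_, ?_, ?_⟩
    · intro h
      obtain ⟨n, hn⟩ := mem_iUnion.1 h
      exact (h𝒰 n).1 (hsubW n hn)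
    · intro U h
      obtain ⟨n, hn⟩ := mem_iUnion.1 h
      exact (h𝒰 n).2.1 U (hsubW n hn)
    · intro K hK
      obtain ⟨f, hf, hfK⟩ := hcl K hK 1 one_pos
      obtain ⟨n, hn⟩ := mem_iUnion.1 hf
      refine ⟨W n f, mem_iUnion.2 ⟨n, f, hn, rfl⟩, fun x hx => ?_⟩
      by_contra hxU
      have h1 := (hW n f ((hB n).2 hn)).2 x hxU
      have h2 := hfK x hx
      rw [h1] at h2
      simp at h2
  · intro H A hA
    have step : ∀ k : ℕ, ∃ F : ℕ → Set C(X, ℝ),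
        (∀ j, (F j).Finite ∧ F j ⊆ A (Nat.pair k j)) ∧
        ∀ K ∈ mu, ∃ j, ∃ f ∈ F j, ∀ x ∈ K, |f x| < 1 / ((k : ℝ) + 1) := by
      intro k
      set ε : ℝ := 1 / ((k : ℝ) + 1) with hεdef
      have hε : 0 < ε := Nat.one_div_pos_of_nat
      by_cases hc : ∃ j, ∃ f ∈ A (Nat.pair k j), ∀ x, |f x| < ε
      · obtain ⟨j, f, hf, hfx⟩ := hc
        refine ⟨fun i => {g | g = f ∧ i = j}, fun i => ⟨?_, ?_⟩, ?_⟩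
        · exact (finite_singleton f).subset fun g hg => hg.1
        · rintro g ⟨rfl, rfl⟩
          exact hf
        · intro K _
          exact ⟨j, f, ⟨rfl, rfl⟩, fun x _ => hfx x⟩
      · push Not at hc
        have hU : ∀ j, (fun f : C(X, ℝ) => {x | |f x| < ε}) '' A (Nat.pair k j) ∈
            fCovers lam := by
          intro j
          refine ⟨?_, ?_, ?_⟩
          · rintro ⟨f, hf, hfu⟩
            obtain ⟨x, hx⟩ := hc j f hf
            have : x ∈ {x | |f x| < ε} := by
              have hfu' : {x | |f x| < ε} = univ := hfu
              rw [hfu']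
              trivial
            exact absurd this (not_lt.2 hx)
          · rintro _ ⟨f, _, rfl⟩
            exact isCozero_lt f ε
          · intro K hK
            obtain ⟨f, hf, hfK⟩ := (mem_closure_setOpen hlam _).1 (hA (Nat.pair k j)).1 K hK ε hε
            exact ⟨_, ⟨f, hf, rfl⟩, hfK⟩
        obtain ⟨V, hV, -, -, hcov⟩ := H _ hU
        have hpull : ∀ j, ∃ F : Set C(X, ℝ), F ⊆ A (Nat.pair k j) ∧ F.Finite ∧
            (fun f : C(X, ℝ) => {x | |f x| < ε}) '' F = V j := by
          intro j
          exact exists_subset_image_finite_and.1 ⟨V j, (hV j).2, (hV j).1, rfl⟩ |> fun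
            ⟨F, h1, h2, h3⟩ => ⟨F, h1, h2, h3.symm⟩
        choose F hF1 hF2 hF3 using hpull
        refine ⟨F, fun j => ⟨hF2 j, hF1 j⟩, fun K hK => ?_⟩
        obtain ⟨U, hU, hKU⟩ := hcov K hK
        obtain ⟨j, hj⟩ := mem_iUnion.1 hU
        rw [← hF3 j] at hj
        obtain ⟨f, hf, rfl⟩ := hj
        exact ⟨j, f, hf, fun x hx => hKU hx⟩
    choose F hF1 hF2 using step
    refine ⟨fun n => F n.unpair.1 n.unpair.2, fun n => ?_, ?_, ?_⟩
    · have := hF1 n.unpair.1 n.unpair.2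
      rwa [Nat.pair_unpair] at this
    · rw [mem_closure_setOpen hmu]
      intro K hK ε hε
      obtain ⟨k, hk⟩ := exists_nat_one_div_lt hε
      obtain ⟨j, f, hf, hfK⟩ := hF2 k K hK
      refine ⟨f, mem_iUnion.2 ⟨Nat.pair k j, ?_⟩, fun x hx => (hfK x hx).trans hk⟩
      simpa using hf
    · intro h
      obtain ⟨n, hn⟩ := mem_iUnion.1 h
      have := (hF1 n.unpair.1 n.unpair.2).2 hn
      rw [Nat.pair_unpair] at this
      exact (hA n).2 this
end
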